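/- Let M be an acyclic module over a finite alphabet Λ with input set I of size k and node set S, let ω : I → S be total, and let F = ↻_ω M. Define A(k,1) = |Λ|^k and, for c > 1, A(k,c) = |Λ|^{k·c} − Σ_{c' | c, c' < c} A(k,c'). Then for every c ≥ 1, the number of attractors of size c of F is at most A(k,c). -/

import Mathlib

/-- A module over alphabet `Λ` with node set `S` and input set `I`:
a family of local functions `f s : Λ^S → Λ^I → Λ`. -/
structure AModule (Λ S I : Type) where
  f : S → (S → Λ) → (I → Λ) → Λ

namespace AModule

variable {Λ S I : Type}

/-- One-step update `M(x,i)`. -/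
def upd (M : AModule Λ S I) (x : S → Λ) (i : I → Λ) : S → Λ :=
  fun s => M.f s x i

/-- Iterated update `M(x,(i_1,…,i_m))`, defined by
`M(x,∅) = x` and `M(x,(i_1,…,i_m)) = M(M(x,i_1),(i_2,…,i_m))`. -/
def seqUpd (M : AModule Λ S I) (x : S → Λ) {m : ℕ} (J : Fin m → I → Λ) : S → Λ :=
  (List.ofFn J).foldl M.upd x

/-- Node `s` influences node `s'`: two configurations over `S ∪ I` differing
exactly at `s` (so with the same input part) on which `f_{s'}` differs. -/
def Influences (M : AModule Λ S I) (s s' : S) : Prop :=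
  ∃ (x x' : S → Λ) (i : I → Λ),
    (∀ r, r ≠ s → x r = x' r) ∧ x s ≠ x' s ∧ M.f s' x i ≠ M.f s' x' i

/-- `M` is acyclic: its interaction digraph has no directed cycle. -/
def Acyclic (M : AModule Λ S I) : Prop :=
  ∀ s, ¬ Relation.TransGen M.Influences s s

/-- `O` is an output function of delay `m` for node `s`. -/
def IsOutputFn (M : AModule Λ S I) (s : S) {m : ℕ}
    (O : (Fin m → I → Λ) → Λ) : Prop :=
  ∀ (x : S → Λ) (J : Fin m → I → Λ), M.seqUpd x J s = O J

/-- The set of delays `m ≥ 1` for which `s` admits an output function. -/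
def delaySet (M : AModule Λ S I) (s : S) : Set ℕ :=
  {m | 1 ≤ m ∧ ∃ O : (Fin m → I → Λ) → Λ, M.IsOutputFn s O}

/-- The complete recursive wiring `↻_ω M` as a map on configurations:
`F(x)_s = f_s(x, (x_{ω(α)})_{α ∈ I})`. -/
def wireF (M : AModule Λ S I) (ω : I → S) : (S → Λ) → (S → Λ) :=
  fun x => M.upd x (fun α => x (ω α))

/-- The input sequence of length `k` generated by `x`:
`Ĵ(x)^k_ℓ = F^{ℓ-1}(x)|_{ω(I)}`. -/
def genSeq (M : AModule Λ S I) (ω : I → S) (x : S → Λ) (k : ℕ) :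
    Fin k → I → Λ :=
  fun ℓ α => (M.wireF ω)^[ℓ.val] x (ω α)

end AModule

/-- An attractor of size `c` of the parallel map `F`: the (finite) periodic
orbit of a configuration whose minimal period is `c`. -/
def IsAttractor {Λ S : Type} (F : (S → Λ) → (S → Λ)) (c : ℕ)
    (X : Set (S → Λ)) : Prop :=
  ∃ x : S → Λ, Function.minimalPeriod F x = c ∧ X = {y | ∃ j : ℕ, y = F^[j] x}

/-- `A(k,1) = N^k` and `A(k,c) = N^{k·c} − Σ_{c' | c, c' < c} A(k,c')`. -/
def Abound (N k : ℕ) : ℕ → ℤ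
  | c =>
    if c = 1 then (N : ℤ) ^ k
    else (N : ℤ) ^ (k * c) - ∑ c' ∈ c.properDivisors.attach, Abound N k c'.1
termination_by c => c
decreasing_by exact (Nat.mem_properDivisors.mp c'.2).2

/-!
Record the inputs that a configuration `x` of `F` feeds back to the module along its trajectory.
This intertwines `F` with the shift on sequences of letters in `I → Λ`. An acyclic module forgets
its initial state: node by node along the acyclic order, two trajectories driven by the same inputs
eventually agree. Hence recurrent configurations are determined by the inputs they generate, and
the configurations of minimal period `c` inject into the sequences of minimal period `c` over an
alphabet of `|Λ| ^ k` letters. The latter are exactly `A(k, c)` in number, since both counts have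
the same sums over divisors; and each attractor of size `c` contains a configuration of minimal
period `c`.
-/

open Function Set Filter SymbolicDynamics.FullShift

section PeriodicPoints

variable {α β : Type*} {f : α → α} {g : β → β} {h : α → β} {n : ℕ}

/-- The points of minimal period `n` of `f`. For `n = 0` these are the points that are not
periodic, by the convention of `Function.minimalPeriod`. -/
def ptsOfMinimalPeriod (f : α → α) (n : ℕ) : Set α :=
  {x | minimalPeriod f x = n}

theorem ptsOfMinimalPeriod_subset_ptsOfPeriod (f : α → α) (n : ℕ) :
    ptsOfMinimalPeriod f n ⊆ ptsOfPeriod f n := by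
  rintro x rfl
  exact isPeriodicPt_minimalPeriod f x

theorem ptsOfMinimalPeriod_subset_periodicPts (hn : 0 < n) :
    ptsOfMinimalPeriod f n ⊆ periodicPts f := fun _ hx ↦
  mk_mem_periodicPts hn (ptsOfMinimalPeriod_subset_ptsOfPeriod f n hx)

theorem sum_divisors_ncard_ptsOfMinimalPeriod (hn : n ≠ 0) (hfin : (ptsOfPeriod f n).Finite) :
    ∑ d ∈ n.divisors, (ptsOfMinimalPeriod f d).ncard = (ptsOfPeriod f n).ncard := by
  classical
  have hmaps : ∀ x ∈ hfin.toFinset, minimalPeriod f x ∈ n.divisors := fun x hx ↦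
    Nat.mem_divisors.2 ⟨(hfin.mem_toFinset.1 hx).minimalPeriod_dvd, hn⟩
  rw [ncard_eq_toFinset_card _ hfin, Finset.card_eq_sum_card_fiberwise hmaps]
  refine Finset.sum_congr rfl fun d hd ↦ ?_
  have hfiber : ptsOfMinimalPeriod f d = ↑{x ∈ hfin.toFinset | minimalPeriod f x = d} := by
    ext x
    have hperiod : minimalPeriod f x = d → IsPeriodicPt f n x := by
      rintro rfl
      exact isPeriodicPt_iff_minimalPeriod_dvd.2 (Nat.dvd_of_mem_divisors hd)
    simpa [ptsOfMinimalPeriod] using hperiod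
  rw [hfiber, ncard_coe_finset]

theorem minimalPeriod_eq_of_semiconj_of_injOn (hsemi : Semiconj h f g)
    (hinj : InjOn h (periodicPts f)) {x : α} (hx : x ∈ periodicPts f) :
    minimalPeriod g (h x) = minimalPeriod f x := by
  refine minimalPeriod_eq_minimalPeriod_iff.2 fun n ↦ ⟨fun hgn ↦ ?_, fun hfn ↦ hfn.map hsemi⟩
  obtain ⟨p, hp, hfp⟩ := hx
  refine hinj (mk_mem_periodicPts hp (hfp.apply_iterate n)) (mk_mem_periodicPts hp hfp) ?_
  rw [hsemi.iterate_right n x, hgn.eq]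

theorem ncard_ptsOfMinimalPeriod_le_of_semiconj (hsemi : Semiconj h f g)
    (hinj : InjOn h (periodicPts f)) (hn : 0 < n) (hfin : (ptsOfMinimalPeriod g n).Finite) :
    (ptsOfMinimalPeriod f n).ncard ≤ (ptsOfMinimalPeriod g n).ncard := by
  have hsub : ptsOfMinimalPeriod f n ⊆ periodicPts f := ptsOfMinimalPeriod_subset_periodicPts hn
  exact ncard_le_ncard_of_injOn h
    (fun x hx ↦ (minimalPeriod_eq_of_semiconj_of_injOn hsemi hinj (hsub hx)).trans hx)
    (hinj.mono hsub) hfin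

theorem eq_of_eventually_iterate_eq {x y : α} (hx : x ∈ periodicPts f) (hy : y ∈ periodicPts f)
    (hxy : ∀ᶠ n in atTop, f^[n] x = f^[n] y) : x = y := by
  obtain ⟨p, hp, hxp⟩ := hx
  obtain ⟨q, hq, hyq⟩ := hy
  obtain ⟨n, hn⟩ := hxy.exists
  exact (hxp.iterate n).eq_of_apply_eq (hyq.iterate n) hp hq hn

end PeriodicPoints

section Shift

variable {α β : Type*}

theorem iterate_shift {G : Type*} [AddMonoid G] (g : G) (n : ℕ) :
    (shift g : (G → β) → G → β)^[n] = shift (n • g) := by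
  induction n with
  | zero =>
    funext u
    simp
  | succ n ih =>
    funext u
    rw [iterate_succ_apply', ih, succ_nsmul, shift_add]

theorem isPeriodicPt_shift_one_iff {c : ℕ} {u : ℕ → β} :
    IsPeriodicPt (shift 1) c u ↔ Function.Periodic u c := by
  simp [IsPeriodicPt, IsFixedPt, iterate_shift, funext_iff, Function.Periodic, add_comm]

/-- A sequence of period `c` is determined by the word formed by its first `c` letters, and every
word of length `c` arises in this way. -/
def periodicEquivWord (β : Type*) (c : ℕ) [NeZero c] :
    {u : ℕ → β // Function.Periodic u c} ≃ (Fin c → β) where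
  toFun u i := u.1 i
  invFun w := ⟨fun n ↦ w (Fin.ofNat c n), fun n ↦ by simp [Fin.ofNat]⟩
  left_inv u := Subtype.ext <| funext fun n ↦ u.2.map_mod_nat n
  right_inv w := funext fun i ↦ by simp

/-- `periodicEquivWord` for the periodic points of the shift. -/
def ptsOfPeriodShiftEquivWord (β : Type*) (c : ℕ) [NeZero c] :
    ptsOfPeriod (shift 1 : (ℕ → β) → ℕ → β) c ≃ (Fin c → β) :=
  (Equiv.subtypeEquivRight fun _ ↦ isPeriodicPt_shift_one_iff).trans (periodicEquivWord β c)

theorem ncard_ptsOfPeriod_shift_one (β : Type*) (c : ℕ) [NeZero c] :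
    (ptsOfPeriod (shift 1 : (ℕ → β) → ℕ → β) c).ncard = Nat.card β ^ c := by
  rw [← Nat.card_coe_set_eq, Nat.card_congr (ptsOfPeriodShiftEquivWord β c), Nat.card_fun,
    Nat.card_fin]

theorem finite_ptsOfPeriod_shift_one (β : Type*) [Finite β] (c : ℕ) [NeZero c] :
    (ptsOfPeriod (shift 1 : (ℕ → β) → ℕ → β) c).Finite :=
  Finite.of_equiv _ (ptsOfPeriodShiftEquivWord β c).symm

/-- The itinerary of `x` under `F`, as seen through the observable `φ`. For `F = M.wireF ω` and
`φ = (· ∘ ω)` it is the infinite version of `AModule.genSeq`. -/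
def itinerary (F : α → α) (φ : α → β) (x : α) : ℕ → β :=
  fun n ↦ φ (F^[n] x)

theorem semiconj_itinerary (F : α → α) (φ : α → β) :
    Semiconj (itinerary F φ) F (shift 1) := fun x ↦ by
  funext n
  rw [shift_apply, itinerary, itinerary, add_comm, iterate_succ_apply]

end Shift

section Abound

theorem sum_divisors_abound (N k : ℕ) {c : ℕ} (hc : c ≠ 0) :
    ∑ d ∈ c.divisors, Abound N k d = (N : ℤ) ^ (k * c) := by
  rw [← Nat.cons_self_properDivisors hc, Finset.sum_cons, Abound]
  split_ifs with hc1
  · simp [hc1]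
  · rw [Finset.sum_attach c.properDivisors (Abound N k), sub_add_cancel]

theorem abound_eq_ncard_ptsOfMinimalPeriod {β : Type*} [Finite β] {N k : ℕ}
    (hβ : Nat.card β = N ^ k) {c : ℕ} (hc : 0 < c) :
    Abound N k c = (ptsOfMinimalPeriod (shift 1 : (ℕ → β) → ℕ → β) c).ncard := by
  have hAbound : ∀ n > 0, ∑ d ∈ n.divisors, Abound N k d = (N : ℤ) ^ (k * n) := fun n hn ↦
    sum_divisors_abound N k hn.ne'
  have hncard : ∀ n > 0, ∑ d ∈ n.divisors,
      ((ptsOfMinimalPeriod (shift 1 : (ℕ → β) → ℕ → β) d).ncard : ℤ) = (N : ℤ) ^ (k * n) := by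
    intro n hn
    have : NeZero n := ⟨hn.ne'⟩
    rw [← Nat.cast_sum,
      sum_divisors_ncard_ptsOfMinimalPeriod hn.ne' (finite_ptsOfPeriod_shift_one β n),
      ncard_ptsOfPeriod_shift_one, hβ, pow_mul, Nat.cast_pow, Nat.cast_pow]
  rw [← ArithmeticFunction.sum_eq_iff_sum_mul_moebius_eq.1 hAbound c hc,
    ArithmeticFunction.sum_eq_iff_sum_mul_moebius_eq.1 hncard c hc]

end Abound

theorem dependsOn_setOf_exists_update_ne {ι β : Type*} [Finite ι] [DecidableEq ι] {π : ι → Type*}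
    (f : (∀ i, π i) → β) : DependsOn f {i | ∃ x v, f (update x i v) ≠ f x} := by
  have := Fintype.ofFinite ι
  intro x y hxy
  have hpiecewise (D : Finset ι) : f (D.piecewise x y) = f y := by
    induction D using Finset.induction_on with
    | empty => rw [Finset.piecewise_empty]
    | insert i D hi ih =>
      rw [Finset.piecewise_insert, ← ih]
      by_contra hne
      have hupdate : update (D.piecewise x y) i (x i) = D.piecewise x y := by
        rw [update_eq_self_iff, Finset.piecewise_eq_of_notMem _ _ _ hi]
        exact hxy i ⟨_, _, hne⟩
      exact hne (congrArg f hupdate)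
  simpa only [Finset.piecewise_univ] using hpiecewise Finset.univ

namespace AModule

variable {Λ S I : Type} {M : AModule Λ S I}

theorem dependsOn_influences [Finite S] (M : AModule Λ S I) (s : S) (i : I → Λ) :
    DependsOn (fun x ↦ M.f s x i) {r | M.Influences r s} := by
  classical
  refine (dependsOn_setOf_exists_update_ne fun x ↦ M.f s x i).mono ?_
  rintro r ⟨x, v, hne⟩
  refine ⟨update x r v, x, i, fun t ht ↦ update_of_ne ht v x, fun hv ↦ hne ?_, hne⟩
  rw [update_self] at hv
  rw [hv, update_eq_self]

theorem Acyclic.wellFounded_influences [Finite S] (hM : M.Acyclic) :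
    WellFounded M.Influences := by
  have : Std.Irrefl (Relation.TransGen M.Influences) := ⟨hM⟩
  exact Subrelation.wf Relation.TransGen.single
    (Finite.wellFounded_of_trans_of_irrefl (Relation.TransGen M.Influences))

theorem Acyclic.eventually_eq_of_upd [Finite S] (hM : M.Acyclic) {J : ℕ → I → Λ}
    {X Y : ℕ → S → Λ} (hX : ∀ n, X (n + 1) = M.upd (X n) (J n))
    (hY : ∀ n, Y (n + 1) = M.upd (Y n) (J n)) : ∀ᶠ n in atTop, X n = Y n := by
  suffices hnode : ∀ s, ∀ᶠ n in atTop, X n s = Y n s by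
    simpa only [funext_iff, eventually_all] using hnode
  intro s
  induction s using hM.wellFounded_influences.induction with
  | _ s ih =>
    have hinfluences : ∀ᶠ n in atTop, ∀ r, M.Influences r s → X n r = Y n r := by
      simpa only [eventually_all, eventually_imp_distrib_left] using ih
    rw [← map_add_atTop_eq_nat 1, eventually_map]
    filter_upwards [hinfluences] with n hn
    rw [hX, hY]
    exact M.dependsOn_influences s (J n) hn

theorem Acyclic.injOn_itinerary_periodicPts [Finite S] (hM : M.Acyclic) (ω : I → S) :
    InjOn (itinerary (M.wireF ω) (· ∘ ω)) (periodicPts (M.wireF ω)) := by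
  intro x hx y hy hxy
  refine eq_of_eventually_iterate_eq hx hy ?_
  refine hM.eventually_eq_of_upd (J := itinerary (M.wireF ω) (· ∘ ω) x)
    (fun n ↦ iterate_succ_apply' _ n x) (fun n ↦ ?_)
  rw [hxy]
  exact iterate_succ_apply' _ n y

theorem Acyclic.ncard_ptsOfMinimalPeriod_wireF_le [Finite Λ] [Finite S] [Finite I]
    (hM : M.Acyclic) (ω : I → S) {c : ℕ} (hc : 0 < c) :
    ((ptsOfMinimalPeriod (M.wireF ω) c).ncard : ℤ) ≤ Abound (Nat.card Λ) (Nat.card I) c := by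
  have : NeZero c := ⟨hc.ne'⟩
  rw [abound_eq_ncard_ptsOfMinimalPeriod (β := I → Λ) Nat.card_fun hc]
  exact_mod_cast ncard_ptsOfMinimalPeriod_le_of_semiconj (semiconj_itinerary (M.wireF ω) (· ∘ ω))
    (hM.injOn_itinerary_periodicPts ω) hc
    ((finite_ptsOfPeriod_shift_one (I → Λ) c).subset
      (ptsOfMinimalPeriod_subset_ptsOfPeriod _ c))

end AModule

theorem card_isAttractor_le_ncard_ptsOfMinimalPeriod {Λ S : Type} [Finite Λ] [Finite S]
    (F : (S → Λ) → S → Λ) (c : ℕ) :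
    Nat.card {X : Set (S → Λ) // IsAttractor F c X} ≤ (ptsOfMinimalPeriod F c).ncard := by
  have himage : {X | IsAttractor F c X} =
      (fun x ↦ {y | ∃ j : ℕ, y = F^[j] x}) '' ptsOfMinimalPeriod F c := by
    ext X
    simp only [IsAttractor, ptsOfMinimalPeriod, mem_image, mem_ofPred_eq, eq_comm (a := X)]
  change Nat.card {X | IsAttractor F c X} ≤ _
  rw [Nat.card_coe_set_eq, himage]
  exact ncard_image_le

/-- the number of attractors of size `c` of the complete
recursive wiring of an acyclic module with `k` inputs is at most `A(k,c)`. -/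
theorem statement8 {Λ S I : Type} [Fintype Λ] [Fintype S] [Fintype I]
    (hΛ : 2 ≤ Fintype.card Λ) (k : ℕ) (hk : Fintype.card I = k)
    (M : AModule Λ S I) (hM : M.Acyclic) (ω : I → S)
    (c : ℕ) (hc : 1 ≤ c) :
    (Nat.card {X : Set (S → Λ) // IsAttractor (M.wireF ω) c X} : ℤ) ≤
      Abound (Fintype.card Λ) k c := by
  subst hk
  have hattractors : (Nat.card {X : Set (S → Λ) // IsAttractor (M.wireF ω) c X} : ℤ) ≤
      (ptsOfMinimalPeriod (M.wireF ω) c).ncard :=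
    mod_cast card_isAttractor_le_ncard_ptsOfMinimalPeriod (M.wireF ω) c
  rw [← Nat.card_eq_fintype_card, ← Nat.card_eq_fintype_card]
  exact hattractors.trans (hM.ncard_ptsOfMinimalPeriod_wireF_le ω hc)
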